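/- arXiv:math/0307401 — 2 statements merged into one kernel-verified Lean document; each statement's English description precedes it below -/
import Mathlib

section
/- Let x be a finite binary word avoiding α-powers, where 2 < α ≤ 7/3. Then there exist words u, v ∈ {ε, 0, 1, 00, 11} and a finite binary word y avoiding α-powers such that x = u μ(y) v. -/
/-- The Thue–Morse morphism `μ` on a single letter (`false` = 0, `true` = 1):
`μ(0) = 01`, `μ(1) = 10`. -/
def muLetter : Bool → List Bool
  | false => [false, true]
  | true  => [true, false]

/-- The Thue–Morse morphism `μ` on binary words. -/
def mu (w : List Bool) : List Bool := (w.map muLetter).flatten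

/-- `z` is a `β`-power (for a rational `β`): `z = xⁿx'` with `x'` a prefix of `x`
and `n + |x'|/|x| = β`. -/
def IsPower (β : ℚ) (z : List Bool) : Prop :=
  ∃ (n : ℕ) (x x' : List Bool), x ≠ [] ∧ x' <+: x ∧
    z = (List.replicate n x).flatten ++ x' ∧
    (n : ℚ) + (x'.length : ℚ) / (x.length : ℚ) = β

/-- The finite word `w` is `α`-power-free: no subword (contiguous factor) of `w`
is a `β`-power for any rational `β ≥ α`. -/
def PowerFree (α : ℝ) (w : List Bool) : Prop :=
  ∀ z : List Bool, z <:+: w → ∀ β : ℚ, α ≤ (β : ℝ) → ¬ IsPower β z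

/-- The finite word `w` contains an `α`-power: some subword of `w` is a
`β`-power for some rational `β ≥ α`. -/
def ContainsPower (α : ℝ) (w : List Bool) : Prop :=
  ∃ z : List Bool, z <:+: w ∧ ∃ β : ℚ, α ≤ (β : ℝ) ∧ IsPower β z

/-- `z` is a (finite) subword of the infinite word `w : ℕ → Bool`. -/
def InfSubword (z : List Bool) (w : ℕ → Bool) : Prop :=
  ∃ i : ℕ, z = (List.range z.length).map fun k => w (i + k)

/-- The infinite word `w` is `α`-power-free. -/
def PowerFreeInf (α : ℝ) (w : ℕ → Bool) : Prop :=
  ∀ z : List Bool, InfSubword z w → ∀ β : ℚ, α ≤ (β : ℝ) → ¬ IsPower β z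

/-- The infinite word `w` contains an `α`-power. -/
def ContainsPowerInf (α : ℝ) (w : ℕ → Bool) : Prop :=
  ∃ z : List Bool, InfSubword z w ∧ ∃ β : ℚ, α ≤ (β : ℝ) ∧ IsPower β z

/-- The length-`n` prefix of an infinite word. -/
def wordPrefix (w : ℕ → Bool) (n : ℕ) : List Bool := (List.range n).map w

/-- `h : Σ₂* → Σ₂*` is a morphism. -/
def IsMorphism (h : List Bool → List Bool) : Prop :=
  ∀ x y : List Bool, h (x ++ y) = h x ++ h y

/-- A morphism is non-erasing if it erases neither letter. -/
def NonErasing (h : List Bool → List Bool) : Prop :=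
  h [false] ≠ [] ∧ h [true] ≠ []

/-- The infinite word `u` is the image of the infinite word `w` under the morphism `h`
(obtained by concatenating the images of the letters of `w`): every `h(w[0..n))` is a
prefix of `u`, and these prefixes exhaust `u`. -/
def IsMorphImage (h : List Bool → List Bool) (w u : ℕ → Bool) : Prop :=
  (∀ n : ℕ, wordPrefix u (h (wordPrefix w n)).length = h (wordPrefix w n)) ∧
  ∀ m : ℕ, ∃ n : ℕ, m ≤ (h (wordPrefix w n)).length

/-- The complementation morphism `E` : `E(0) = 1`, `E(1) = 0`. -/
def eMorph (w : List Bool) : List Bool := w.map fun b => !b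

/-- The Thue–Morse word `μ^ω(0)` (`tm n` = parity of the binary digit sum of `n`). -/
def tm (n : ℕ) : Bool := (Nat.digits 2 n).sum % 2 == 1

/-- `μ³(0) = 01101001`. -/
def w01101001 : List Bool := [false, true, true, false, true, false, false, true]

/-- `μ³(1) = 10010110`. -/
def w10010110 : List Bool := [true, false, false, true, false, true, true, false]

/-! A word containing no overlap `asasa` with `|as| ≤ 3` already has the form `u μ(y) v` with
`u, v ∈ {ε, 0, 1, 00, 11}`, by induction on its length. A letter `a` prepended to `u μ(y) v`
lengthens `u` or completes a block of `μ`, unless `u = bb` already. In that case `a = !b`, and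
avoiding short overlaps forces `|y| ≤ 1`, so that shifting the block boundaries by one letter
refactors the word as `μ(!b) μ(z) b v` with `|z| ≤ 1`. Here `v ≠ bb`, so `b v` is short or begins
with the block `μ(b)`. Finally, `μ` maps `β`-powers to `β`-powers, so `y` inherits power-freeness.
-/

theorem mu_cons (a : Bool) (w : List Bool) : mu (a :: w) = a :: (!a) :: mu w := by
  cases a <;> rfl

theorem mu_append (w z : List Bool) : mu (w ++ z) = mu w ++ mu z := by
  simp [mu]

theorem mu_flatten (l : List (List Bool)) : mu l.flatten = (l.map mu).flatten := by
  induction l with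
  | nil => rfl
  | cons w l ih => rw [List.flatten_cons, mu_append, ih, List.map_cons, List.flatten_cons]

theorem length_mu (w : List Bool) : (mu w).length = 2 * w.length := by
  induction w with
  | nil => rfl
  | cons a w ih => simp only [mu_cons, List.length_cons, ih, mul_add]

theorem mu_ne_nil {w : List Bool} (hw : w ≠ []) : mu w ≠ [] := by
  simpa [← List.length_pos_iff, length_mu] using hw

theorem isPower_mu {β : ℚ} {z : List Bool} (hz : IsPower β z) : IsPower β (mu z) := by
  obtain ⟨n, x, x', hx, ⟨t, rfl⟩, rfl, hβ⟩ := hz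
  refine ⟨n, mu (x' ++ t), mu x', mu_ne_nil hx, ⟨mu t, (mu_append x' t).symm⟩, ?_, ?_⟩
  · rw [mu_append, mu_flatten, List.map_replicate]
  · rw [length_mu, length_mu, Nat.cast_mul, Nat.cast_mul, mul_div_mul_left _ _ (by simp), hβ]

theorem isPower_overlap (a : Bool) (s : List Bool) :
    IsPower (2 + 1 / (s.length + 1)) ((a :: s) ++ (a :: s) ++ [a]) :=
  ⟨2, a :: s, [a], List.cons_ne_nil a s, ⟨s, rfl⟩, by simp, by simp⟩

theorem PowerFree.of_infix {α : ℝ} {w z : List Bool} (hw : PowerFree α w) (hz : z <:+: w) :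
    PowerFree α z :=
  fun t ht => hw t (ht.trans hz)

theorem PowerFree.of_mu {α : ℝ} {y : List Bool} (hy : PowerFree α (mu y)) : PowerFree α y := by
  rintro z ⟨s, t, rfl⟩ β hβ hz
  exact hy (mu z) ⟨mu s, mu t, by simp only [mu_append]⟩ β hβ (isPower_mu hz)

/-- The word `w` contains no overlap `asasa`, with `a` a letter, of period `|as| ≤ 3`. Such an
overlap is a `(2 + 1/|as|)`-power, hence at least a `7/3`-power. -/
def AvoidsShortOverlaps (w : List Bool) : Prop :=
  ∀ (a : Bool) (s : List Bool), s.length ≤ 2 → ¬ (a :: s) ++ (a :: s) ++ [a] <:+: w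

theorem AvoidsShortOverlaps.of_infix {w z : List Bool} (hw : AvoidsShortOverlaps w)
    (hz : z <:+: w) : AvoidsShortOverlaps z :=
  fun a s hs h => hw a s hs (h.trans hz)

theorem PowerFree.avoidsShortOverlaps {α : ℝ} (hα : α ≤ 7 / 3) {w : List Bool}
    (hw : PowerFree α w) : AvoidsShortOverlaps w := by
  intro a s hs hz
  refine hw _ hz _ ?_ (isPower_overlap a s)
  have hs' : (s.length : ℝ) + 1 ≤ 3 := by exact_mod_cast Nat.succ_le_succ hs
  calc α ≤ 2 + 1 / 3 := by linarith
    _ ≤ 2 + 1 / (s.length + 1) := by gcongr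
    _ = ((2 + 1 / (s.length + 1) : ℚ) : ℝ) := by push_cast; rfl

theorem AvoidsShortOverlaps.eq_nil_or_eq_singleton_of_mu {b : Bool} {y : List Bool}
    (h : AvoidsShortOverlaps ([!b, b, b] ++ mu y)) : y = [] ∨ y = [!b] := by
  rcases y with _ | ⟨c, y⟩
  · exact .inl rfl
  obtain rfl | rfl := Bool.eq_or_eq_not c b
  · have hcube : [c, c, c] <:+: [!c, c, c] ++ mu (c :: y) :=
      ⟨[!c], (!c) :: mu y, by simp [mu_cons]⟩
    exact absurd hcube (h c [] (by simp))
  rcases y with _ | ⟨d, y⟩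
  · exact .inr rfl
  obtain rfl | rfl := Bool.eq_or_eq_not d b
  · have hoverlap : [!d, d, d, !d, d, d, !d] <:+: [!d, d, d] ++ mu ((!d) :: d :: y) :=
      ⟨[], mu y, by simp [mu_cons]⟩
    exact absurd hoverlap (h (!d) [d, d] (by simp))
  · have hoverlap : [b, !b, b, !b, b] <:+: [!b, b, b] ++ mu ((!b) :: (!b) :: y) :=
      ⟨[!b, b], mu y, by simp [mu_cons]⟩
    exact absurd hoverlap (h b [!b] (by simp))

/-- The words `ε`, `0`, `1`, `00`, `11` that may flank `μ(y)` in a factorization. -/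
def fringes : List (List Bool) :=
  [[], [false], [true], [false, false], [true, true]]

theorem mem_fringes {w : List Bool} :
    w ∈ fringes ↔ w = [] ∨ ∃ b, w = [b] ∨ w = [b, b] := by
  simp only [fringes, List.mem_cons, List.not_mem_nil, or_false, Bool.exists_bool]
  tauto

theorem nil_mem_fringes : [] ∈ fringes := mem_fringes.2 (.inl rfl)

theorem singleton_mem_fringes (b : Bool) : [b] ∈ fringes := mem_fringes.2 (.inr ⟨b, .inl rfl⟩)

theorem pair_mem_fringes (b : Bool) : [b, b] ∈ fringes := mem_fringes.2 (.inr ⟨b, .inr rfl⟩)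

theorem exists_cons_fringe_eq_mu_append {b : Bool} {v : List Bool} (hv : v ∈ fringes)
    (hvb : v ≠ [b, b]) : ∃ z, ∃ v' ∈ fringes, b :: v = mu z ++ v' := by
  obtain rfl | ⟨c, rfl | rfl⟩ := mem_fringes.1 hv
  · exact ⟨[], [b], singleton_mem_fringes b, rfl⟩
  · obtain rfl | rfl := Bool.eq_or_eq_not c b
    · exact ⟨[], [c, c], pair_mem_fringes c, rfl⟩
    · exact ⟨[b], [], nil_mem_fringes, by rw [mu_cons]; rfl⟩
  · obtain rfl | rfl := Bool.eq_or_eq_not c b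
    · exact absurd rfl hvb
    · exact ⟨[b], [!b], singleton_mem_fringes _, by rw [mu_cons]; rfl⟩

/-- The word `x` is of the form `u μ(y) v` with `u, v ∈ {ε, 0, 1, 00, 11}`. -/
def HasMuFactorization (x : List Bool) : Prop :=
  ∃ u ∈ fringes, ∃ v ∈ fringes, ∃ y, x = u ++ mu y ++ v

theorem AvoidsShortOverlaps.hasMuFactorization_not_cons_pair {b : Bool} {y v : List Bool}
    (h : AvoidsShortOverlaps ([!b, b, b] ++ mu y ++ v)) (hv : v ∈ fringes) :
    HasMuFactorization ([!b, b, b] ++ mu y ++ v) := by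
  obtain ⟨z, hz⟩ : ∃ z, b :: mu y = mu z ++ [b] := by
    have hy := h.of_infix (List.prefix_append _ v).isInfix
    obtain rfl | rfl := hy.eq_nil_or_eq_singleton_of_mu
    · exact ⟨[], rfl⟩
    · exact ⟨[b], by simp only [mu_cons, Bool.not_not]; rfl⟩
  have hword : [!b, b, b] ++ mu y ++ v = mu ((!b) :: z) ++ b :: v := by
    simpa [mu_cons] using congrArg (· ++ v) hz
  have hvb : v ≠ [b, b] := by
    rintro rfl
    have hcube : [b, b, b] <:+: [!b, b, b] ++ mu y ++ [b, b] :=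
      ⟨mu ((!b) :: z), [], by rw [hword, List.append_nil]⟩
    exact h b [] (by simp) hcube
  obtain ⟨z', v', hv', hbv⟩ := exists_cons_fringe_eq_mu_append hv hvb
  refine ⟨[], nil_mem_fringes, v', hv', ((!b) :: z) ++ z', ?_⟩
  rw [hword, hbv, List.nil_append, mu_append, List.append_assoc]

theorem HasMuFactorization.cons {a : Bool} {x : List Bool} (hx : HasMuFactorization x)
    (h : AvoidsShortOverlaps (a :: x)) : HasMuFactorization (a :: x) := by
  obtain ⟨u, hu, v, hv, y, rfl⟩ := hx
  obtain rfl | ⟨b, rfl | rfl⟩ := mem_fringes.1 hu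
  · exact ⟨[a], singleton_mem_fringes a, v, hv, y, rfl⟩
  · obtain rfl | rfl := Bool.eq_or_eq_not a b
    · exact ⟨[a, a], pair_mem_fringes a, v, hv, y, rfl⟩
    · exact ⟨[], nil_mem_fringes, v, hv, (!b) :: y, by simp [mu_cons]⟩
  · obtain rfl | rfl := Bool.eq_or_eq_not a b
    · have hcube : [a, a, a] <:+: a :: ([a, a] ++ mu y ++ v) := ⟨[], mu y ++ v, by simp⟩
      exact absurd hcube (h a [] (by simp))
    · exact h.hasMuFactorization_not_cons_pair hv

theorem AvoidsShortOverlaps.hasMuFactorization {x : List Bool} (h : AvoidsShortOverlaps x) :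
    HasMuFactorization x := by
  induction x with
  | nil => exact ⟨[], nil_mem_fringes, [], nil_mem_fringes, [], rfl⟩
  | cons a x ih => exact (ih (h.of_infix (List.suffix_cons a x).isInfix)).cons h

theorem factorization_of_power_free_general {α : ℝ} (hα : α ≤ 7 / 3) {x : List Bool}
    (hx : PowerFree α x) :
    ∃ u v y : List Bool, u ∈ fringes ∧ v ∈ fringes ∧ PowerFree α y ∧ x = u ++ mu y ++ v := by
  obtain ⟨u, hu, v, hv, y, rfl⟩ := (hx.avoidsShortOverlaps hα).hasMuFactorization
  exact ⟨u, v, y, hu, hv, (hx.of_infix ⟨u, v, rfl⟩).of_mu, rfl⟩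

/-- Factorization theorem of Karhumäki and Shallit: if `x` avoids `α`-powers with
`2 < α ≤ 7/3`, then `x = u μ(y) v` with `u, v ∈ {ε, 0, 1, 00, 11}` and `y` avoiding
`α`-powers. -/
theorem factorization_of_power_free (α : ℚ) (hα₁ : 2 < α) (hα₂ : α ≤ 7/3)
    (x : List Bool) (hx : PowerFree (α : ℝ) x) :
    ∃ u v y : List Bool,
      u ∈ ([[], [false], [true], [false, false], [true, true]] : List (List Bool)) ∧
      v ∈ ([[], [false], [true], [false, false], [true, true]] : List (List Bool)) ∧
      PowerFree (α : ℝ) y ∧ x = u ++ mu y ++ v := by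
  have hα : (α : ℝ) ≤ 7 / 3 := by simpa using (Rat.cast_le (K := ℝ)).2 hα₂
  exact factorization_of_power_free_general hα hx
end

section
/- Let i be a natural number and let w be a 7/3-power-free finite binary word with |w| = 5·2^i − 1. Let a be a letter of Σ₂. Then the word w a w contains a 7/3-power x as a subword with |x| ≤ 5·2^i. -/
/-!
The word `w a w` contains all conjugates of `u = w a`, so it suffices to find, in every circular
binary word of length `5·2^i`, a `7/3`-power no longer than the word itself. If there is none and
`i > 0`, the squares of letters all start at positions of the same parity: two of them at odd
distance would force a cube `aaa`, an alternation `ababa`, or `baabaab`. Hence the word splits into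
blocks `01` and `10`, so it is the Thue–Morse image of a circular word of half the length, and a
power in the latter lifts to one of the same exponent and twice the length. Descending in `i` leaves
circular words of length `5`, in which one of `aaa` and `ababa` always occurs.
-/

section Factors

variable {A : Type*} {f : ℕ → A} {α β : ℝ} {K L : ℕ}

/-- The factor `f s, f (s + 1), …, f (s + n - 1)` of an infinite word, given by its starting
position `s` and its length `n`. -/
def factor (f : ℕ → A) (s n : ℕ) : List A := (List.range n).map fun k ↦ f (s + k)

@[simp]
lemma length_factor (f : ℕ → A) (s n : ℕ) : (factor f s n).length = n := by
  simp [factor]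

lemma hasPeriod_factor_iff {s n p : ℕ} :
    (factor f s n).HasPeriod p ↔ ∀ k, k + p < n → f (s + k) = f (s + (k + p)) := by
  rw [List.hasPeriod_iff_getElem?, length_factor]
  refine forall_congr' fun k ↦ ⟨fun h hk ↦ ?_, fun h hk ↦ ?_⟩
  · simpa [factor, hk, show k < n by omega] using h (by omega)
  · simpa [factor, show k < n by omega, show k + p < n by omega] using h (by omega)

/-- The infinite word `f` contains no `β`-power of length at most `L` with `β ≥ α`, for `α ≥ 1`.
Powers are encoded by periods: a factor of length `n` with a period `p`, `0 < p ≤ n`, is an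
`n / p`-power. -/
def PowerFreeUpTo (α : ℝ) (L : ℕ) (f : ℕ → A) : Prop :=
  ∀ s n p : ℕ, 0 < p → α * p ≤ n → n ≤ L → ¬ (factor f s n).HasPeriod p

namespace PowerFreeUpTo

lemma mono (h : PowerFreeUpTo α L f) (hαβ : α ≤ β) (hKL : K ≤ L) : PowerFreeUpTo β K f :=
  fun s n p hp hβ hn ↦ h s n p hp
    ((mul_le_mul_of_nonneg_right hαβ p.cast_nonneg).trans hβ) (hn.trans hKL)

lemma ne_succ_of_eq_succ (h : PowerFreeUpTo 3 3 f) {s : ℕ} (hs : f s = f (s + 1)) :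
    f (s + 1) ≠ f (s + 2) := by
  intro hs'
  refine h s 3 1 one_pos (by norm_num) le_rfl (hasPeriod_factor_iff.2 fun k hk ↦ ?_)
  have hk : k < 2 := by omega
  interval_cases k
  exacts [hs, hs']

lemma of_uniform_blocks {q r : ℕ} (hq : 0 < q)
    (hblock : ∀ m m', f (r + q * m) = f (r + q * m') →
      ∀ j < q, f (r + q * m + j) = f (r + q * m' + j))
    (h : PowerFreeUpTo α (q * L) f) : PowerFreeUpTo α L fun m ↦ f (r + q * m) := by
  intro s n p hp hα hn hper
  rw [hasPeriod_factor_iff] at hper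
  have hα' : α * (q * p : ℕ) ≤ (q * n : ℕ) := by
    push_cast
    calc α * (q * p) = q * (α * p) := by ring
      _ ≤ q * n := by gcongr
  refine h (r + q * s) (q * n) (q * p) (by positivity) hα' (by gcongr)
    (hasPeriod_factor_iff.2 fun k hk ↦ ?_)
  have hdiv : k / q + p < n := by
    rw [← Nat.add_mul_div_left k p hq]
    exact Nat.div_lt_of_lt_mul hk
  have heq := hblock _ _ (hper (k / q) hdiv) (k % q) (Nat.mod_lt k hq)
  convert heq using 2 <;> linear_combination -Nat.div_add_mod k q

end PowerFreeUpTo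

end Factors

section BinaryWords

variable {f : ℕ → Bool}

lemma bool_eq_of_ne_of_ne {a b c : Bool} (hab : a ≠ b) (hbc : b ≠ c) : a = c :=
  (Bool.eq_not.2 hab).trans (Bool.eq_not.2 hbc.symm).symm

namespace PowerFreeUpTo

lemma exists_eq_succ (h : PowerFreeUpTo (5 / 2) 5 f) (s : ℕ) :
    ∃ k < 4, f (s + k) = f (s + k + 1) := by
  by_contra! hne
  have eq_add_two : ∀ k < 3, f (s + k) = f (s + (k + 2)) := fun k hk ↦
    bool_eq_of_ne_of_ne (hne k (by omega)) (hne (k + 1) (by omega))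
  exact h s 5 2 two_pos (by norm_num) le_rfl
    (hasPeriod_factor_iff.2 fun k hk ↦ eq_add_two k (by omega))

lemma ne_at_distance_three (h : PowerFreeUpTo (7 / 3) 7 f) {s : ℕ} (hs : f (s + 1) = f (s + 2)) :
    f (s + 4) ≠ f (s + 5) := by
  intro hs'
  have hcube : PowerFreeUpTo 3 3 f := h.mono (by norm_num) (by norm_num)
  have h01 : f s ≠ f (s + 1) := fun e ↦ hcube.ne_succ_of_eq_succ e hs
  have h23 : f (s + 2) ≠ f (s + 3) := hcube.ne_succ_of_eq_succ hs
  have h34 : f (s + 3) ≠ f (s + 4) := fun e ↦ hcube.ne_succ_of_eq_succ e hs'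
  have h56 : f (s + 5) ≠ f (s + 6) := hcube.ne_succ_of_eq_succ hs'
  have h03 : f s = f (s + 3) := bool_eq_of_ne_of_ne h01 (hs ▸ h23)
  have h36 : f (s + 3) = f (s + 6) := bool_eq_of_ne_of_ne h34 (hs' ▸ h56)
  have h24 : f (s + 2) = f (s + 4) := bool_eq_of_ne_of_ne h23 h34
  -- The seven letters are `baabaab`.
  refine h s 7 3 three_pos (by norm_num) le_rfl (hasPeriod_factor_iff.2 fun k hk ↦ ?_)
  have hk : k < 4 := by omega
  interval_cases k
  exacts [h03, hs.trans h24, h24.trans hs', h36]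

lemma ne_at_odd_distance (h : PowerFreeUpTo (7 / 3) 7 f) (m : ℕ) {s : ℕ}
    (hs : f (s + 1) = f (s + 2)) : f (s + 2 * m + 2) ≠ f (s + 2 * m + 3) := by
  have hcube : PowerFreeUpTo 3 3 f := h.mono (by norm_num) (by norm_num)
  have halt : PowerFreeUpTo (5 / 2) 5 f := h.mono (by norm_num) (by norm_num)
  induction m using Nat.twoStepInduction generalizing s with
  | zero => exact hcube.ne_succ_of_eq_succ hs
  | one => exact h.ne_at_distance_three hs
  | more m ih ih' =>
    obtain ⟨k, hk, hsq⟩ := halt.exists_eq_succ (s + 2)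
    interval_cases k
    · exact absurd hsq (hcube.ne_succ_of_eq_succ hs)
    · convert ih' (s := s + 2) hsq using 2 <;> ring
    · exact absurd hsq (h.ne_at_distance_three hs)
    · convert ih (s := s + 4) hsq using 2 <;> ring

lemma exists_forall_ne_succ (h : PowerFreeUpTo (7 / 3) 7 f) :
    ∃ r, ∀ m, f (r + 2 * m) ≠ f (r + 2 * m + 1) := by
  have halt : PowerFreeUpTo (5 / 2) 5 f := h.mono (by norm_num) (by norm_num)
  obtain ⟨k, -, hsq⟩ := halt.exists_eq_succ 1
  refine ⟨k + 2, fun m ↦ ?_⟩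
  convert h.ne_at_odd_distance m (s := k) (by convert hsq using 2 <;> ring) using 2 <;> ring

lemma of_two_mul {r L : ℕ} (hr : ∀ m, f (r + 2 * m) ≠ f (r + 2 * m + 1)) {α : ℝ}
    (h : PowerFreeUpTo α (2 * L) f) : PowerFreeUpTo α L fun m ↦ f (r + 2 * m) := by
  refine h.of_uniform_blocks two_pos fun m m' heq j hj ↦ ?_
  interval_cases j
  · exact heq
  · rw [← Bool.not_eq.2 (hr m), ← Bool.not_eq.2 (hr m'), heq]

end PowerFreeUpTo

lemma not_powerFreeUpTo_of_periodic_five (hf : Function.Periodic f 5) :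
    ¬ PowerFreeUpTo (5 / 2) 5 f := by
  intro h
  have hcube : PowerFreeUpTo 3 3 f := h.mono (by norm_num) (by norm_num)
  obtain ⟨s, h01⟩ : ∃ s, f s = f (s + 1) := by
    obtain ⟨k, -, hk⟩ := h.exists_eq_succ 0
    exact ⟨0 + k, hk⟩
  have h5 : f (s + 5) = f s := hf s
  have h6 : f (s + 6) = f (s + 1) := hf (s + 1)
  have h12 : f (s + 1) ≠ f (s + 2) := hcube.ne_succ_of_eq_succ h01
  have h45 : f (s + 4) ≠ f (s + 5) := fun e ↦
    hcube.ne_succ_of_eq_succ e (h5.trans (h01.trans h6.symm))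
  have h24 : f (s + 2) = f (s + 4) :=
    bool_eq_of_ne_of_ne h12.symm (h01 ▸ h5 ▸ h45.symm)
  have h23 : f (s + 2) ≠ f (s + 3) := fun e ↦ hcube.ne_succ_of_eq_succ e (e.symm.trans h24)
  -- The circular word is `aabab`, which contains `ababa` from its second letter on.
  obtain ⟨k, hk, hsq⟩ := h.exists_eq_succ (s + 1)
  interval_cases k
  · exact h12 hsq
  · exact h23 hsq
  · exact h23 (h24.trans hsq.symm)
  · exact h45 hsq

theorem not_powerFreeUpTo_of_periodic (i : ℕ) (hf : Function.Periodic f (5 * 2 ^ i)) :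
    ¬ PowerFreeUpTo (7 / 3) (5 * 2 ^ i) f := by
  induction i generalizing f with
  | zero =>
    exact fun h ↦ not_powerFreeUpTo_of_periodic_five hf (h.mono (by norm_num) le_rfl)
  | succ i ih =>
    intro h
    have hdouble : 5 * 2 ^ (i + 1) = 2 * (5 * 2 ^ i) := by ring
    have hpos : 0 < 2 ^ i := by positivity
    rw [hdouble] at hf h
    obtain ⟨r, hr⟩ := (h.mono le_rfl (by omega)).exists_forall_ne_succ
    have hperiodic : Function.Periodic (fun m ↦ f (r + 2 * m)) (5 * 2 ^ i) := fun m ↦ by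
      simpa only [mul_add, add_assoc] using hf (r + 2 * m)
    exact ih hperiodic (h.of_two_mul hr)

end BinaryWords

section CircularWords

variable {A : Type*}

lemma rotate_infix_append_dropLast (u : List A) (s : ℕ) : u.rotate s <:+: u ++ u.dropLast := by
  rcases u.eq_nil_or_concat' with rfl | ⟨w, a, rfl⟩
  · simp
  set r := s % (w ++ [a]).length with hr
  have hrw : r ≤ w.length := by
    have := Nat.mod_lt s (y := (w ++ [a]).length) (by simp)
    simp only [List.length_append, List.length_singleton] at this hr
    omega
  rw [List.rotate_eq_drop_append_take_mod, ← hr, List.take_append_of_le_length hrw,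
    List.dropLast_concat]
  refine ⟨(w ++ [a]).take r, w.drop r, ?_⟩
  rw [← List.append_assoc, List.take_append_drop, List.append_assoc, List.take_append_drop]

/-- The periodic infinite word `uuu⋯`, whose factors of length `|u|` are the conjugates of `u`. For
`u = []` it is the constant word `default`. -/
def periodicExtension [Inhabited A] (u : List A) (k : ℕ) : A := u.getI (k % u.length)

variable [Inhabited A]

lemma periodic_periodicExtension (u : List A) :
    Function.Periodic (periodicExtension u) u.length := fun k ↦ by
  simp [periodicExtension]

lemma factor_periodicExtension (u : List A) (s : ℕ) {n : ℕ} (hn : n ≤ u.length) :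
    factor (periodicExtension u) s n = (u.rotate s).take n := by
  refine List.ext_getElem (by simpa using hn) fun k hk _ ↦ ?_
  have hu : 0 < u.length := by
    rw [length_factor] at hk
    omega
  simp [factor, periodicExtension, List.getElem_rotate, Nat.add_comm s k,
    List.getI_eq_getElem _ (Nat.mod_lt _ hu)]

lemma factor_periodicExtension_infix (u : List A) (s : ℕ) {n : ℕ} (hn : n ≤ u.length) :
    factor (periodicExtension u) s n <:+: u ++ u.dropLast := by
  rw [factor_periodicExtension u s hn]
  exact (List.take_prefix n _).isInfix.trans (rotate_infix_append_dropLast u s)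

end CircularWords

lemma exists_eq_flatten_replicate_append {A : Type*} {x z : List A} (hx : x ≠ [])
    (hz : z <+: x ++ z) :
    ∃ (n : ℕ) (x' : List A), x' <+: x ∧ z = (List.replicate n x).flatten ++ x' := by
  by_cases hlen : z.length ≤ x.length
  · exact ⟨0, z, List.prefix_of_prefix_length_le hz (List.prefix_append x z) hlen, by simp⟩
  · obtain ⟨y, rfl⟩ : x <+: z :=
      List.prefix_of_prefix_length_le (List.prefix_append x z) hz (by omega)
    obtain ⟨n, x', hx', hy⟩ :=
      exists_eq_flatten_replicate_append hx ((List.prefix_append_right_inj x).1 hz)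
    exact ⟨n + 1, x', hx', by simp [List.replicate_succ, ← hy]⟩
termination_by z.length
decreasing_by
  subst_vars
  simpa using List.length_pos_iff.2 hx

lemma isPower_of_hasPeriod {z : List Bool} {p : ℕ} (hp : 0 < p) (hpz : p ≤ z.length)
    (hz : z.HasPeriod p) : IsPower (z.length / p) z := by
  have hlen : (z.take p).length = p := List.length_take_of_le hpz
  have hne : z.take p ≠ [] := List.length_pos_iff.1 (hlen.symm ▸ hp)
  obtain ⟨n, x', hx', hzx⟩ := exists_eq_flatten_replicate_append hne hz
  refine ⟨n, z.take p, x', hne, hx', hzx, ?_⟩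
  have hcount : z.length = n * p + x'.length := by
    simpa [hlen, -List.length_take] using congrArg List.length hzx
  rw [hlen, hcount]
  field_simp
  push_cast
  ring

lemma exists_isPower_of_not_powerFreeUpTo {f : ℕ → Bool} {α : ℝ} {L : ℕ} (hα : 1 ≤ α)
    (hf : ¬ PowerFreeUpTo α L f) :
    ∃ s n, n ≤ L ∧ ∃ β : ℚ, α ≤ (β : ℝ) ∧ IsPower β (factor f s n) := by
  simp only [PowerFreeUpTo, not_forall, not_not] at hf
  obtain ⟨s, n, p, hp, hexp, hn, hper⟩ := hf
  have hp' : (0 : ℝ) < p := by exact_mod_cast hp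
  have hpn : p ≤ n := by
    exact_mod_cast (le_mul_of_one_le_left hp'.le hα).trans hexp
  refine ⟨s, n, hn, n / p, ?_, ?_⟩
  · push_cast
    rwa [le_div_iff₀ hp']
  · simpa using isPower_of_hasPeriod hp (by simpa using hpn) hper

theorem waw_contains_power_five_general (i : ℕ) (w : List Bool)
    (hlen : w.length = 5 * 2 ^ i - 1) (a : Bool) :
    ∃ x : List Bool, x <:+: (w ++ [a] ++ w) ∧ x.length ≤ 5 * 2 ^ i ∧
      ∃ β : ℚ, (7 / 3 : ℝ) ≤ (β : ℝ) ∧ IsPower β x := by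
  set u := w ++ [a]
  have hpos : 0 < 2 ^ i := by positivity
  have hu : u.length = 5 * 2 ^ i := by
    simp only [u, List.length_append, List.length_singleton]
    omega
  obtain ⟨s, n, hn, hpower⟩ := exists_isPower_of_not_powerFreeUpTo (by norm_num)
    (not_powerFreeUpTo_of_periodic i (hu ▸ periodic_periodicExtension u))
  have hinfix := factor_periodicExtension_infix u s (hn.trans_eq hu.symm)
  rw [show u.dropLast = w from List.dropLast_concat] at hinfix
  exact ⟨factor (periodicExtension u) s n, hinfix, by simpa using hn, hpower⟩

/-- If `w` is `7/3`-power-free with `|w| = 5·2^i − 1` and `a` is a letter, then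
`w a w` contains a `7/3`-power `x` with `|x| ≤ 5·2^i`. -/
theorem waw_contains_power_five (i : ℕ) (w : List Bool)
    (hw : PowerFree (7/3 : ℝ) w) (hlen : w.length = 5 * 2 ^ i - 1) (a : Bool) :
    ∃ x : List Bool, x <:+: (w ++ [a] ++ w) ∧ x.length ≤ 5 * 2 ^ i ∧
      ∃ β : ℚ, (7/3 : ℝ) ≤ (β : ℝ) ∧ IsPower β x := by
  exact waw_contains_power_five_general i w hlen a
end
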